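/- arXiv:2402.08134 — 4 statements merged into one kernel-verified Lean document; each statement's English description precedes it below -/
import Mathlib

section
/- Let A ∈ ℝ^{m×k} have full column rank with thin SVD A = U Σ Vᵀ, let b ∈ ℝ^m, and let S ∈ ℝ^{s×m} be any matrix such that SU has full column rank. Let x_nls = argmin_{x ≥ 0} ‖Ax − b‖₂ and x̂_nls = argmin_{x ≥ 0} ‖SAx − Sb‖₂, and set r_nls = A x_nls − b. Then ‖x̂_nls − x_nls‖₂ ≤ ‖Uᵀ r_nls − Uᵀ Sᵀ S r_nls‖₂ / (σ_min(SU)² · σ_min(A)), where σ_min denotes the smallest singular value. In particular, if σ_min(SU)² ≥ 1/√2 and ‖Uᵀ r_nls − Uᵀ Sᵀ S r_nls‖₂ ≤ √ε_r ‖r_nls‖₂/√2 for some ε_r ∈ (0,1), then ‖x̂_nls − x_nls‖₂ ≤ √ε_r ‖r_nls‖₂ / σ_min(A). -/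
/-!
The bound is a comparison of two variational inequalities. Put `d = x̂ - x` and `w = Σ Vᵀ d`, so
that `A d = U w` and `‖A d‖ = ‖w‖`. Optimality of `x` over the nonnegative orthant, tested at `x̂`,
gives `⟨A d, r⟩ ≥ 0`; optimality of `x̂`, tested at `x`, gives `⟨S A d, S A d + S r⟩ ≤ 0`
(`variational_ineq`). Together,
`‖S U w‖² ≤ ⟨A d, r⟩ - ⟨S A d, S r⟩ = ⟨w, Uᵀ r - Uᵀ Sᵀ S r⟩`,
and Cauchy-Schwarz with `σ_min(SU) ‖w‖ ≤ ‖S U w‖` yields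
`σ_min(SU)² ‖w‖ ≤ ‖Uᵀ r - Uᵀ Sᵀ S r‖`. Finally `σ_min(A) ‖d‖ ≤ ‖A d‖ = ‖w‖`.

Dividing requires both smallest singular values to be positive, which is `sigmaMin_pos` for
full column rank and `k > 0`. For `k = 0` the supremum defining `sigmaMin` is over an unbounded
set and takes the value `0`, but then `d` is the empty vector and the bounds are trivial.
-/

open Matrix

/-- Euclidean norm of a real vector. -/
noncomputable def vnorm {ι : Type*} [Fintype ι] (x : ι → ℝ) : ℝ :=
  Real.sqrt (∑ i, x i ^ 2)

/-- The smallest singular value of a real matrix, characterized as the largest constant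
`c` with `c‖x‖ ≤ ‖Ax‖` for all `x`. -/
noncomputable def sigmaMin {m k : ℕ} (A : Matrix (Fin m) (Fin k) ℝ) : ℝ :=
  sSup {c : ℝ | ∀ x : Fin k → ℝ, c * vnorm x ≤ vnorm (A.mulVec x)}

lemma vnorm_nonneg {ι : Type*} [Fintype ι] (x : ι → ℝ) : 0 ≤ vnorm x := Real.sqrt_nonneg _

lemma vnorm_sq {ι : Type*} [Fintype ι] (x : ι → ℝ) : vnorm x ^ 2 = x ⬝ᵥ x := by
  rw [vnorm, Real.sq_sqrt (Finset.sum_nonneg fun i _ => sq_nonneg _)]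
  simp [dotProduct, sq]

lemma vnorm_eq_norm {ι : Type*} [Fintype ι] (x : ι → ℝ) : vnorm x = ‖WithLp.toLp 2 x‖ := by
  simp [vnorm, EuclideanSpace.norm_eq]

lemma dotProduct_le_vnorm_mul {ι : Type*} [Fintype ι] (x y : ι → ℝ) :
    x ⬝ᵥ y ≤ vnorm x * vnorm y := by
  rw [vnorm, vnorm]
  exact Real.sum_mul_le_sqrt_mul_sqrt _ _ _

lemma vnorm_pos {ι : Type*} [Fintype ι] {x : ι → ℝ} (hx : x ≠ 0) : 0 < vnorm x := by
  rw [vnorm_eq_norm, norm_pos_iff]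
  simpa using hx

lemma sigmaMin_nonneg {m k : ℕ} (A : Matrix (Fin m) (Fin k) ℝ) : 0 ≤ sigmaMin A :=
  Real.sSup_nonneg' ⟨0, fun x => by simpa using vnorm_nonneg _, le_rfl⟩

/-- The supremum defining `sigmaMin` is attained. For `k = 0` this holds because the only vector
has norm `0`. -/
lemma sigmaMin_mul_le {m k : ℕ} (A : Matrix (Fin m) (Fin k) ℝ) (x : Fin k → ℝ) :
    sigmaMin A * vnorm x ≤ vnorm (A *ᵥ x) := by
  by_cases hx : x = 0
  · subst hx
    simp [vnorm]
  · have hp := vnorm_pos hx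
    rw [← le_div_iff₀ hp]
    refine csSup_le ⟨0, fun y => by simpa using vnorm_nonneg _⟩ fun c hc => ?_
    rw [le_div_iff₀ hp]
    exact hc x

lemma mulVec_injective_of_rank {m k : ℕ} (A : Matrix (Fin m) (Fin k) ℝ) (h : A.rank = k) :
    Function.Injective A.mulVecLin := by
  rw [← LinearMap.ker_eq_bot, ← Submodule.finrank_eq_zero]
  have h1 := A.mulVecLin.finrank_range_add_finrank_ker
  rw [Matrix.rank] at h
  rw [h, Module.finrank_fin_fun] at h1
  omega

/-- An injective linear map between finite-dimensional normed spaces is antilipschitz, which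
bounds the smallest singular value away from `0`. -/
lemma sigmaMin_pos {m k : ℕ} (hk : 0 < k) (A : Matrix (Fin m) (Fin k) ℝ) (h : A.rank = k) :
    0 < sigmaMin A := by
  have hinj := mulVec_injective_of_rank A h
  have hker : LinearMap.ker (Matrix.toEuclideanLin A) = ⊥ := by
    rw [LinearMap.ker_eq_bot']
    intro y hy
    have h0 : A *ᵥ y.ofLp = 0 := by
      simpa using congrArg WithLp.ofLp hy
    have h1 : y.ofLp = 0 := hinj (by simpa using h0)
    ext i
    simpa using congrFun h1 i
  obtain ⟨K, hK, hA⟩ := (Matrix.toEuclideanLin A).exists_antilipschitzWith hker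
  have hK' : (0 : ℝ) < K := by exact_mod_cast hK
  have hmem : (K : ℝ)⁻¹ ∈ {c : ℝ | ∀ x : Fin k → ℝ, c * vnorm x ≤ vnorm (A.mulVec x)} := by
    intro x
    have := hA.le_mul_dist (WithLp.toLp 2 x) 0
    rw [map_zero, dist_zero_right, dist_zero_right] at this
    rw [inv_mul_le_iff₀ hK', vnorm_eq_norm, vnorm_eq_norm]
    simpa using this
  -- Testing at a single nonzero vector bounds the set above, so the supremum is genuine.
  have hbdd : BddAbove {c : ℝ | ∀ x : Fin k → ℝ, c * vnorm x ≤ vnorm (A.mulVec x)} := by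
    have hne : (Pi.single ⟨0, hk⟩ 1 : Fin k → ℝ) ≠ 0 := by simp
    refine ⟨_, fun c hc => (le_div_iff₀ (vnorm_pos hne)).2 (hc _)⟩
  exact (inv_pos.2 hK').trans_le (le_csSup hbdd hmem)

/-- First-order optimality for nonnegative least squares: at a minimizer `x`, the directional
derivative towards any feasible `y` is nonnegative. -/
lemma variational_ineq {m k : ℕ} (M : Matrix (Fin m) (Fin k) ℝ) (c : Fin m → ℝ) (x y : Fin k → ℝ)
    (hx : ∀ i, 0 ≤ x i) (hy : ∀ i, 0 ≤ y i)
    (hmin : ∀ z : Fin k → ℝ, (∀ i, 0 ≤ z i) → vnorm (M *ᵥ x - c) ≤ vnorm (M *ᵥ z - c)) :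
    0 ≤ M *ᵥ (y - x) ⬝ᵥ (M *ᵥ x - c) := by
  set q := M *ᵥ (y - x) with hq
  set p := M *ᵥ x - c with hp
  have hQ : 0 ≤ q ⬝ᵥ q := by rw [← vnorm_sq]; positivity
  have key : ∀ t : ℝ, 0 ≤ t → t ≤ 1 → 0 ≤ t * (2 * (q ⬝ᵥ p) + t * (q ⬝ᵥ q)) := by
    intro t h0 h1
    have h2 := hmin (x + t • (y - x)) fun i => by
      have := mul_nonneg h0 (hy i)
      have := mul_nonneg (sub_nonneg.2 h1) (hx i)
      simp only [Pi.add_apply, Pi.smul_apply, Pi.sub_apply, smul_eq_mul]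
      linarith
    have h3 : M *ᵥ (x + t • (y - x)) - c = p + t • q := by
      rw [mulVec_add, mulVec_smul, hp, hq]; abel
    rw [h3] at h2
    have h4 := pow_le_pow_left₀ (vnorm_nonneg _) h2 2
    rw [vnorm_sq, vnorm_sq] at h4
    simp only [add_dotProduct, dotProduct_add, smul_dotProduct, dotProduct_smul,
      smul_eq_mul, dotProduct_comm p q] at h4
    linarith
  by_contra! hneg
  -- With `a = ⟨q, p⟩ < 0` and `Q = ‖q‖²`, the step `t = -a / (Q - a) ∈ (0, 1]` has `t Q ≤ -a`.
  have hD : 0 < q ⬝ᵥ q - q ⬝ᵥ p := by linarith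
  have ht : 0 < -(q ⬝ᵥ p) / (q ⬝ᵥ q - q ⬝ᵥ p) := div_pos (by linarith) hD
  have ht1 : -(q ⬝ᵥ p) / (q ⬝ᵥ q - q ⬝ᵥ p) ≤ 1 := by rw [div_le_one hD]; linarith
  have h5 := nonneg_of_mul_nonneg_right (key _ ht.le ht1) ht
  have h6 : -(q ⬝ᵥ p) / (q ⬝ᵥ q - q ⬝ᵥ p) * (q ⬝ᵥ q) ≤ -(q ⬝ᵥ p) := by
    rw [div_mul_eq_mul_div, div_le_iff₀ hD]
    nlinarith
  linarith

/-- deterministic structural bound for sketched nonnegative least squares.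
With `A = UΣVᵀ` a thin SVD, `x_nls` and `x̂_nls` the NLS solutions of the full and
sketched problems, and `r_nls = A x_nls − b`:
`‖x̂_nls − x_nls‖₂ ≤ ‖Uᵀr_nls − UᵀSᵀSr_nls‖₂ / (σ_min(SU)² σ_min(A))`; moreover, if
`σ_min(SU)² ≥ 1/√2` and `‖Uᵀr_nls − UᵀSᵀSr_nls‖₂ ≤ √ε_r ‖r_nls‖₂/√2` for some
`ε_r ∈ (0,1)`, then `‖x̂_nls − x_nls‖₂ ≤ √ε_r ‖r_nls‖₂/σ_min(A)`. -/
theorem stmt1 {m k s : ℕ}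
    (A U : Matrix (Fin m) (Fin k) ℝ) (Sig V : Matrix (Fin k) (Fin k) ℝ)
    (hrank : A.rank = k)
    (hU : Uᵀ * U = (1 : Matrix (Fin k) (Fin k) ℝ))
    (hSigiag : ∀ i j, i ≠ j → Sig i j = 0) (hSigPos : ∀ i, 0 < Sig i i)
    (hV : Vᵀ * V = (1 : Matrix (Fin k) (Fin k) ℝ))
    (hSVD : A = U * Sig * Vᵀ)
    (b : Fin m → ℝ) (S : Matrix (Fin s) (Fin m) ℝ)
    (hSU : (S * U).rank = k)
    (xnls xhat : Fin k → ℝ)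
    (hx0 : ∀ i, 0 ≤ xnls i)
    (hxmin : ∀ x : Fin k → ℝ, (∀ i, 0 ≤ x i) →
      vnorm (A.mulVec xnls - b) ≤ vnorm (A.mulVec x - b))
    (hy0 : ∀ i, 0 ≤ xhat i)
    (hymin : ∀ x : Fin k → ℝ, (∀ i, 0 ≤ x i) →
      vnorm ((S * A).mulVec xhat - S.mulVec b) ≤ vnorm ((S * A).mulVec x - S.mulVec b))
    (r : Fin m → ℝ) (hr : r = A.mulVec xnls - b) :
    (vnorm (xhat - xnls)
      ≤ vnorm (Uᵀ.mulVec r - Uᵀ.mulVec (Sᵀ.mulVec (S.mulVec r)))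
          / (sigmaMin (S * U) ^ 2 * sigmaMin A))
    ∧ ∀ εr : ℝ, εr ∈ Set.Ioo (0 : ℝ) 1 →
        sigmaMin (S * U) ^ 2 ≥ 1 / Real.sqrt 2 →
        vnorm (Uᵀ.mulVec r - Uᵀ.mulVec (Sᵀ.mulVec (S.mulVec r)))
            ≤ Real.sqrt εr * vnorm r / Real.sqrt 2 →
        vnorm (xhat - xnls) ≤ Real.sqrt εr * vnorm r / sigmaMin A := by
  have hgeneral : sigmaMin (S * U) ^ 2 * vnorm (A *ᵥ (xhat - xnls))
      ≤ vnorm (Uᵀ.mulVec r - Uᵀ.mulVec (Sᵀ.mulVec (S.mulVec r))) := by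
    set d := xhat - xnls with hd
    set w := Sig *ᵥ (Vᵀ *ᵥ d) with hw
    set g := Uᵀ.mulVec r - Uᵀ.mulVec (Sᵀ.mulVec (S.mulVec r)) with hg
    have hAd : A *ᵥ d = U *ᵥ w := by
      rw [hw, mulVec_mulVec, mulVec_mulVec, hSVD, Matrix.mul_assoc]
    have hSAd : (S * A) *ᵥ d = (S * U) *ᵥ w := by
      rw [← mulVec_mulVec, hAd, mulVec_mulVec]
    have hUw : vnorm (A *ᵥ d) = vnorm w := by
      rw [← sq_eq_sq₀ (vnorm_nonneg _) (vnorm_nonneg _), vnorm_sq, vnorm_sq, hAd,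
        dotProduct_mulVec, vecMul_mulVec, hU, vecMul_one]
    have h1 : 0 ≤ A *ᵥ d ⬝ᵥ r := by
      rw [hr]
      exact variational_ineq A b xnls xhat hx0 hy0 hxmin
    have h2 := variational_ineq (S * A) (S *ᵥ b) xhat xnls hy0 hx0 hymin
    have h3 : (S * A) *ᵥ xhat - S *ᵥ b = (S * U) *ᵥ w + S *ᵥ r := by
      rw [← hSAd, hr, hd, mulVec_sub, mulVec_sub, mulVec_mulVec]; abel
    have h4 : xnls - xhat = -d := by rw [hd]; abel
    rw [h3, h4, mulVec_neg, hSAd, neg_dotProduct, dotProduct_add, ← vnorm_sq] at h2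
    have h5 : w ⬝ᵥ g = A *ᵥ d ⬝ᵥ r - (S * U) *ᵥ w ⬝ᵥ S *ᵥ r := by
      rw [hg, dotProduct_sub, hAd]
      congr 1
      · rw [dotProduct_mulVec, vecMul_transpose]
      · rw [← mulVec_mulVec, dotProduct_mulVec, dotProduct_mulVec, vecMul_transpose,
          vecMul_transpose]
    have h6 : vnorm ((S * U) *ᵥ w) ^ 2 ≤ vnorm w * vnorm g :=
      le_trans (by linarith) (dotProduct_le_vnorm_mul w g)
    have h7 := pow_le_pow_left₀ (mul_nonneg (sigmaMin_nonneg _) (vnorm_nonneg _))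
      (sigmaMin_mul_le (S * U) w) 2
    rw [hUw]
    rcases (vnorm_nonneg w).eq_or_lt with h0 | h0
    · rw [← h0, mul_zero]
      exact vnorm_nonneg g
    · refine le_of_mul_le_mul_left ?_ h0
      linarith
  have hA := sigmaMin_mul_le A (xhat - xnls)
  rcases Nat.eq_zero_or_pos k with rfl | hk
  · have h0 : vnorm (xhat - xnls) = 0 := by simp [vnorm]
    rw [h0]
    exact ⟨div_nonneg (vnorm_nonneg _) (mul_nonneg (sq_nonneg _) (sigmaMin_nonneg _)),
      fun ε _ _ _ => div_nonneg (mul_nonneg (Real.sqrt_nonneg _) (vnorm_nonneg _))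
        (sigmaMin_nonneg _)⟩
  have hApos := sigmaMin_pos hk A hrank
  have hSUpos := sigmaMin_pos hk (S * U) hSU
  constructor
  · rw [le_div_iff₀ (by positivity)]
    calc vnorm (xhat - xnls) * (sigmaMin (S * U) ^ 2 * sigmaMin A)
        = sigmaMin (S * U) ^ 2 * (sigmaMin A * vnorm (xhat - xnls)) := by ring
      _ ≤ sigmaMin (S * U) ^ 2 * vnorm (A *ᵥ (xhat - xnls)) := by gcongr
      _ ≤ _ := hgeneral
  · intro ε _ hσ hN
    rw [le_div_iff₀ hApos, mul_comm]
    refine hA.trans ?_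
    have h1 : 1 / Real.sqrt 2 * vnorm (A *ᵥ (xhat - xnls)) ≤ Real.sqrt ε * vnorm r / Real.sqrt 2 :=
      (mul_le_mul_of_nonneg_right hσ (vnorm_nonneg _)).trans (hgeneral.trans hN)
    rwa [one_div_mul_eq_div, div_le_div_iff_of_pos_right (by positivity)] at h1
end

section
/- Let 𝒞 ⊆ ℝ^k be a convex set, let K and K̂ be k×k symmetric positive semidefinite matrices, let d, d̂ ∈ ℝ^k, and define the convex quadratic programs Q(x) = ½ xᵀ K x − xᵀ d and Q̂(x) = ½ xᵀ K̂ x − xᵀ d̂. Let x* be a minimizer of Q over 𝒞 and x̂* a minimizer of Q̂ over 𝒞. Then (x̂* − x*)ᵀ [∇Q̂(x̂*) − ∇Q̂(x*)] ≤ (x̂* − x*)ᵀ [∇Q(x*) − ∇Q̂(x*)], where ∇Q(x) = Kx − d and ∇Q̂(x) = K̂x − d̂. -/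
/-! Each minimizer satisfies the variational inequality `0 ≤ (y - x)ᵀ(Kx - d)` for all `y ∈ C`
(`first_order_optimality`): otherwise a short step from `x` towards `y` would decrease the
objective. Applying it to `Q` at `x*` with `y = x̂*`, and to `Q̂` at `x̂*` with `y = x*`, and
adding the two inequalities gives the claim. -/

open Matrix

/-- First-order optimality condition for a convex quadratic program, in terms of the gradient
`Kx - d`. -/
lemma first_order_optimality {k : ℕ} {C : Set (Fin k → ℝ)} (hC : Convex ℝ C)
    {K : Matrix (Fin k) (Fin k) ℝ} (hK : K.PosSemidef) {d x y : Fin k → ℝ}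
    (hx : x ∈ C) (hy : y ∈ C)
    (hmin : ∀ z ∈ C,
      (1 / 2) * (x ⬝ᵥ K.mulVec x) - x ⬝ᵥ d ≤ (1 / 2) * (z ⬝ᵥ K.mulVec z) - z ⬝ᵥ d) :
    0 ≤ (y - x) ⬝ᵥ (K.mulVec x - d) := by
  have hsymm : x ⬝ᵥ K.mulVec (y - x) = (y - x) ⬝ᵥ K.mulVec x := by
    have hT : Kᵀ = K := by simpa using hK.isHermitian.eq
    rw [dotProduct_mulVec, ← mulVec_transpose, hT, dotProduct_comm]
  have hq : 0 ≤ (y - x) ⬝ᵥ K.mulVec (y - x) := by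
    simpa using hK.dotProduct_mulVec_nonneg (y - x)
  rw [dotProduct_sub]
  set v := y - x with hv
  set q := v ⬝ᵥ K.mulVec v
  by_contra! hneg
  set g := v ⬝ᵥ K.mulVec x - v ⬝ᵥ d with hg
  -- Along the segment, `Q (x + t v) - Q x = t (g + t q / 2)`; this step length `t ∈ (0, 1]`
  -- satisfies `t q ≤ -g`, which makes the difference negative.
  obtain ⟨t, ht0, ht1, htq⟩ : ∃ t : ℝ, 0 < t ∧ t ≤ 1 ∧ t * q ≤ -g := by
    have hpos : 0 < q - g := by linarith
    refine ⟨-g / (q - g), div_pos (by linarith) hpos, ?_, ?_⟩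
    · rw [div_le_one hpos]; linarith
    · rw [div_mul_eq_mul_div, div_le_iff₀ hpos]; nlinarith
  have h := hmin (x + t • v) (hC.add_smul_sub_mem hx hy ⟨ht0.le, ht1⟩)
  simp only [mulVec_add, mulVec_smul, add_dotProduct, dotProduct_add, smul_dotProduct,
    dotProduct_smul, smul_eq_mul, hsymm] at h
  have h' : 0 ≤ t * (g + t * q / 2) := by
    rw [hg]; linarith
  have := nonneg_of_mul_nonneg_right h' ht0
  linarith

/-- Daniels' convex quadratic program perturbation inequality.
For convex QPs `Q(x) = ½ xᵀKx − xᵀd` and `Q̂(x) = ½ xᵀK̂x − xᵀd̂` minimized over a convex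
set `𝒞` at `x*` and `x̂*` respectively,
`(x̂* − x*)ᵀ[∇Q̂(x̂*) − ∇Q̂(x*)] ≤ (x̂* − x*)ᵀ[∇Q(x*) − ∇Q̂(x*)]`. -/
theorem stmt2 {k : ℕ} (C : Set (Fin k → ℝ)) (hC : Convex ℝ C)
    (K Khat : Matrix (Fin k) (Fin k) ℝ)
    (hK : K.PosSemidef) (hKhat : Khat.PosSemidef)
    (d dhat : Fin k → ℝ)
    (xstar xhatstar : Fin k → ℝ)
    (hxC : xstar ∈ C) (hxhatC : xhatstar ∈ C)
    (hxmin : ∀ x ∈ C,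
      (1 / 2) * (xstar ⬝ᵥ K.mulVec xstar) - xstar ⬝ᵥ d
        ≤ (1 / 2) * (x ⬝ᵥ K.mulVec x) - x ⬝ᵥ d)
    (hxhatmin : ∀ x ∈ C,
      (1 / 2) * (xhatstar ⬝ᵥ Khat.mulVec xhatstar) - xhatstar ⬝ᵥ dhat
        ≤ (1 / 2) * (x ⬝ᵥ Khat.mulVec x) - x ⬝ᵥ dhat) :
    (xhatstar - xstar) ⬝ᵥ ((Khat.mulVec xhatstar - dhat) - (Khat.mulVec xstar - dhat))
      ≤ (xhatstar - xstar) ⬝ᵥ ((K.mulVec xstar - d) - (Khat.mulVec xstar - dhat)) := by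
  have h₁ := first_order_optimality hC hK hxC hxhatC hxmin
  have h₂ := first_order_optimality hC hKhat hxhatC hxC hxhatmin
  simp only [sub_dotProduct, dotProduct_sub] at h₁ h₂ ⊢
  linarith
end

section
/- Let X ∈ ℝ^{m×n}, let U_X ∈ ℝ^{m×l} and V_X ∈ ℝ^{l×n} give a low-rank approximation X ≈ U_X V_X with error μ = ‖X − U_X V_X‖_F, and fix a rank parameter k ≤ l. Let (W*, H*) be a minimizer over entrywise-nonnegative W ∈ ℝ^{m×k}, H ∈ ℝ^{n×k} of ‖U_X V_X − W Hᵀ‖_F, and let υ* = min over entrywise-nonnegative W ∈ ℝ^{m×k}, H ∈ ℝ^{n×k} of ‖X − W Hᵀ‖_F. Then υ* ≤ ‖X − W*(H*)ᵀ‖_F ≤ 2μ + υ*. -/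
open Matrix

/-- Frobenius norm of a real matrix. -/
noncomputable def frob {ι κ : Type*} [Fintype ι] [Fintype κ] (M : Matrix ι κ ℝ) : ℝ :=
  Real.sqrt (∑ i, ∑ j, M i j ^ 2)

/-- The triangle inequality, transferred from Mathlib's Frobenius norm on matrices. -/
theorem frob_sub_le {ι κ : Type*} [Fintype ι] [Fintype κ] (A B C : Matrix ι κ ℝ) :
    frob (A - C) ≤ frob (A - B) + frob (B - C) := by
  letI : NormedAddCommGroup (Matrix ι κ ℝ) := Matrix.frobeniusNormedAddCommGroup
  have key : ∀ M : Matrix ι κ ℝ, frob M = ‖M‖ := fun M => by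
    rw [Matrix.frobenius_norm_def, frob, Real.sqrt_eq_rpow]
    simp
  simp only [key]
  exact norm_sub_le_norm_sub_add_norm_sub A B C

theorem frob_sub_comm {ι κ : Type*} [Fintype ι] [Fintype κ] (A B : Matrix ι κ ℝ) :
    frob (A - B) = frob (B - A) := by
  unfold frob
  congr 1
  refine Finset.sum_congr rfl fun i _ => Finset.sum_congr rfl fun j _ => ?_
  simp only [Matrix.sub_apply]
  ring

/-- error bound for NMF of a low-rank approximate input.
If `μ = ‖X − U_X V_X‖_F`, `(W*, H*)` minimizes `‖U_X V_X − W Hᵀ‖_F` over nonnegative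
factors, and `υ*` is the optimal NMF residual for `X`, then
`υ* ≤ ‖X − W*(H*)ᵀ‖_F ≤ 2μ + υ*`. -/
theorem stmt3 {m n l k : ℕ} (hkl : k ≤ l)
    (X : Matrix (Fin m) (Fin n) ℝ) (UX : Matrix (Fin m) (Fin l) ℝ)
    (VX : Matrix (Fin l) (Fin n) ℝ)
    (μ : ℝ) (hμ : μ = frob (X - UX * VX))
    (Wstar : Matrix (Fin m) (Fin k) ℝ) (Hstar : Matrix (Fin n) (Fin k) ℝ)
    (hWs0 : ∀ i j, 0 ≤ Wstar i j) (hHs0 : ∀ i j, 0 ≤ Hstar i j)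
    (hsmin : ∀ (W : Matrix (Fin m) (Fin k) ℝ) (H : Matrix (Fin n) (Fin k) ℝ),
      (∀ i j, 0 ≤ W i j) → (∀ i j, 0 ≤ H i j) →
      frob (UX * VX - Wstar * Hstarᵀ) ≤ frob (UX * VX - W * Hᵀ))
    (υ : ℝ)
    (hυ : IsLeast {c : ℝ | ∃ (W : Matrix (Fin m) (Fin k) ℝ) (H : Matrix (Fin n) (Fin k) ℝ),
      (∀ i j, 0 ≤ W i j) ∧ (∀ i j, 0 ≤ H i j) ∧ c = frob (X - W * Hᵀ)} υ) :
    υ ≤ frob (X - Wstar * Hstarᵀ) ∧ frob (X - Wstar * Hstarᵀ) ≤ 2 * μ + υ := by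
  obtain ⟨⟨W, H, hW, hH, hWH⟩, hle⟩ := hυ
  refine ⟨hle ⟨Wstar, Hstar, hWs0, hHs0, rfl⟩, ?_⟩
  -- Pass from `X` to `UX * VX`, swap `Wstar * Hstarᵀ` for the optimum `W * Hᵀ` of `X`, pass back.
  have h1 := frob_sub_le X (UX * VX) (Wstar * Hstarᵀ)
  have h2 := hsmin W H hW hH
  have h3 := frob_sub_le (UX * VX) X (W * Hᵀ)
  rw [frob_sub_comm (UX * VX) X] at h3
  linarith
end

section
/- Let X ∈ ℝ^{m×m} be symmetric, let Q ∈ ℝ^{m×l} have orthonormal columns (Qᵀ Q = I_l), and set B = Qᵀ X and P = Q Qᵀ. Then ‖X − P X P‖_F ≤ 2 ‖X − Q B‖_F. -/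
/-!
With `P = QQᵀ` and `E = X - PX`, symmetry of `X` gives `Eᵀ = X - XP`, hence
`X - PXP = E + PEᵀ`. As `PE = 0`, the two summands are Frobenius-orthogonal, so
`‖X - PXP‖² = ‖E‖² + ‖PEᵀ‖²`. Splitting `Eᵀ = PEᵀ + (1 - P)Eᵀ`, again orthogonally, gives
`‖PEᵀ‖ ≤ ‖Eᵀ‖ = ‖E‖`. Both steps are instances of `sum_sq_add_of_transpose_mul_eq_zero`; they
yield the constant `√2`, which is at most `2`.
-/

open Matrix

/-- Pythagoras for the Frobenius norm, for matrices with mutually orthogonal column spaces. -/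
theorem sum_sq_add_of_transpose_mul_eq_zero {ι κ : Type*} [Fintype ι] [Fintype κ]
    (A B : Matrix ι κ ℝ) (h : Aᵀ * B = 0) :
    ∑ i, ∑ j, (A + B) i j ^ 2 = ∑ i, ∑ j, A i j ^ 2 + ∑ i, ∑ j, B i j ^ 2 := by
  have hcross : ∑ i, ∑ j, A i j * B i j = 0 := by
    rw [Finset.sum_comm]
    refine Finset.sum_eq_zero fun j _ => ?_
    simpa [Matrix.mul_apply] using congrFun (congrFun h j) j
  have hexpand : ∑ i, ∑ j, (A + B) i j ^ 2 = ∑ i, ∑ j, A i j ^ 2 + ∑ i, ∑ j, B i j ^ 2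
      + 2 * ∑ i, ∑ j, A i j * B i j := by
    simp only [Finset.mul_sum, ← Finset.sum_add_distrib, Matrix.add_apply]
    refine Finset.sum_congr rfl fun i _ => Finset.sum_congr rfl fun j _ => ?_
    ring
  rw [hexpand, hcross, mul_zero, add_zero]

/-- For symmetric `X` and `Q` with orthonormal columns, with `B = QᵀX` and
`P = QQᵀ`, we have `‖X − PXP‖_F ≤ 2‖X − QB‖_F`. -/
theorem stmt5 {m l : ℕ} (X : Matrix (Fin m) (Fin m) ℝ) (hX : Xᵀ = X)
    (Q : Matrix (Fin m) (Fin l) ℝ) (hQ : Qᵀ * Q = (1 : Matrix (Fin l) (Fin l) ℝ)) :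
    frob (X - (Q * Qᵀ) * X * (Q * Qᵀ)) ≤ 2 * frob (X - Q * (Qᵀ * X)) := by
  rw [← Matrix.mul_assoc Q Qᵀ X]
  have hPP : (Q * Qᵀ) * (Q * Qᵀ) = Q * Qᵀ := by
    rw [Matrix.mul_assoc, ← Matrix.mul_assoc Qᵀ, hQ, Matrix.one_mul]
  have hPt : (Q * Qᵀ)ᵀ = Q * Qᵀ := by simp
  generalize Q * Qᵀ = P at hPP hPt ⊢
  have hEt : (X - P * X)ᵀ = X - X * P := by
    rw [Matrix.transpose_sub, Matrix.transpose_mul, hX, hPt]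
  have hdecomp : X - P * X * P = (X - P * X) + P * (X - P * X)ᵀ := by
    rw [hEt]; noncomm_ring
  have hPE : P * (X - P * X) = 0 := by
    rw [Matrix.mul_sub, ← Matrix.mul_assoc, hPP, sub_self]
  generalize X - P * X = E at hdecomp hPE ⊢
  rw [hdecomp]
  have hEP : Eᵀ * P = 0 := by
    have := congrArg Matrix.transpose hPE
    rwa [Matrix.transpose_mul, hPt, Matrix.transpose_zero] at this
  have h₁ := sum_sq_add_of_transpose_mul_eq_zero E (P * Eᵀ)
    (by rw [← Matrix.mul_assoc, hEP, Matrix.zero_mul])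
  have h₂ := sum_sq_add_of_transpose_mul_eq_zero (P * Eᵀ) (Eᵀ - P * Eᵀ) (by
    rw [Matrix.transpose_mul, hPt, Matrix.mul_assoc, Matrix.mul_sub P, ← Matrix.mul_assoc P P,
      hPP, sub_self, Matrix.mul_zero])
  rw [add_sub_cancel] at h₂
  have htr : ∑ i, ∑ j, Eᵀ i j ^ 2 = ∑ i, ∑ j, E i j ^ 2 := Finset.sum_comm
  have hnn : 0 ≤ ∑ i, ∑ j, (Eᵀ - P * Eᵀ) i j ^ 2 := by positivity
  have hE : 0 ≤ ∑ i, ∑ j, E i j ^ 2 := by positivity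
  unfold frob
  refine Real.sqrt_le_iff.2 ⟨by positivity, ?_⟩
  rw [mul_pow, Real.sq_sqrt hE]
  linarith
end
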